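/- Let p ≡ 2 (mod 3) be a prime and let a, b be integers with p ∤ ab. Then R(C) for C(x,y) = a x^3 + b y^3 is dense in Q_p. -/

import Mathlib

/-!
Let `n` be coprime to `p` and to `p - 1`. Raising to the power `n` is a bijection on `(ℤ/pℤ)ˣ`, so
by Hensel's lemma every unit of `ℤ_[p]` is an `n`-th power. If `a` and `b` are units then, for every
`c : ℤ_[p]`, one of `c` and `c - b` is a unit, so `a * x ^ n + b * y ^ n = c` has a solution with
`y = 0` or `y = 1`. As `ℤ` is dense in `ℤ_[p]`, the values of the form at integers are dense in
`ℤ_[p]`, and therefore their quotients are dense in `ℚ_[p]`. For `n = 3` the condition on `n` says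
exactly that `p ≡ 2 (mod 3)`.
-/

open IsLocalRing Polynomial

section Henselian

variable {R : Type*} [CommRing R] (I : Ideal R) [HenselianRing R I] {n : ℕ} {u : R}

theorem exists_pow_eq_of_mk_pow_eq (hn : IsUnit (n : R)) (hu : IsUnit u) {x : R}
    (hx : Ideal.Quotient.mk I x ^ n = Ideal.Quotient.mk I u) : ∃ y : R, y ^ n = u := by
  nontriviality R
  have hn0 : n ≠ 0 := by
    rintro rfl
    simp at hn
  have hx_unit : IsUnit (Ideal.Quotient.mk I x) :=
    (isUnit_pow_iff hn0).mp (hx ▸ hu.map (Ideal.Quotient.mk I))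
  have hroot : (X ^ n - C u).eval x ∈ I := by
    simpa [← Ideal.Quotient.mk_eq_mk_iff_sub_mem] using hx
  have hsimple : IsUnit (Ideal.Quotient.mk I ((X ^ n - C u).derivative.eval x)) := by
    simpa [derivative_X_pow] using (hn.map (Ideal.Quotient.mk I)).mul (hx_unit.pow (n - 1))
  obtain ⟨y, hy, -⟩ := HenselianRing.is_henselian _ (monic_X_pow_sub_C u hn0) x hroot hsimple
  exact ⟨y, by simpa [sub_eq_zero] using hy⟩

theorem exists_pow_eq_of_coprime_card_units_quotient (hn : IsUnit (n : R))
    (hcard : (Nat.card (R ⧸ I)ˣ).Coprime n) (hu : IsUnit u) : ∃ y : R, y ^ n = u := by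
  let v : (R ⧸ I)ˣ := (hu.map (Ideal.Quotient.mk I)).unit
  obtain ⟨x, hx⟩ := Ideal.Quotient.mk_surjective ((powCoprime hcard).symm v : R ⧸ I)
  refine exists_pow_eq_of_mk_pow_eq I hn hu (x := x) ?_
  rw [hx, ← Units.val_pow_eq_pow_val, ← powCoprime_apply hcard, Equiv.apply_symm_apply,
    IsUnit.unit_spec]

end Henselian

section LocalRing

variable {R : Type*} [CommRing R] [IsLocalRing R] {n : ℕ} {a b : R}

theorem exists_mul_pow_add_mul_pow_eq (hn : n ≠ 0) (hpow : ∀ u : R, IsUnit u → ∃ x, x ^ n = u)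
    (ha : IsUnit a) (hb : IsUnit b) (c : R) : ∃ x y : R, a * x ^ n + b * y ^ n = c := by
  have exists_mul_pow_eq {d : R} (hd : IsUnit d) : ∃ x, a * x ^ n = d := by
    obtain ⟨a, rfl⟩ := ha
    obtain ⟨x, hx⟩ := hpow (↑a⁻¹ * d) (a⁻¹.isUnit.mul hd)
    exact ⟨x, by rw [hx, Units.mul_inv_cancel_left]⟩
  have hc : IsUnit c ∨ IsUnit (b - c) := isUnit_or_isUnit_of_isUnit_add (by simpa using hb)
  rcases hc with hc | hcb
  · obtain ⟨x, hx⟩ := exists_mul_pow_eq hc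
    exact ⟨x, 0, by simp [hx, hn]⟩
  · obtain ⟨x, hx⟩ := exists_mul_pow_eq (IsUnit.sub_iff.mp hcb)
    exact ⟨x, 1, by simp [hx]⟩

theorem denseRange_mul_pow_add_mul_pow [TopologicalSpace R] [IsTopologicalSemiring R] (hn : n ≠ 0)
    (hpow : ∀ u : R, IsUnit u → ∃ x, x ^ n = u) (ha : IsUnit a) (hb : IsUnit b) {ι : Type*}
    {f : ι → R} (hf : DenseRange f) :
    DenseRange fun v : ι × ι ↦ a * f v.1 ^ n + b * f v.2 ^ n := by
  have hsurj : Function.Surjective fun v : R × R ↦ a * v.1 ^ n + b * v.2 ^ n := by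
    intro c
    obtain ⟨x, y, hxy⟩ := exists_mul_pow_add_mul_pow_eq hn hpow ha hb c
    exact ⟨(x, y), hxy⟩
  exact hsurj.denseRange.comp (hf.prodMap hf) (by fun_prop)

end LocalRing

theorem dense_setOf_div_of_denseRange {A K ι : Type*} [CommRing A] [TopologicalSpace A]
    [T1Space A] [Field K] [TopologicalSpace K] [ContinuousMul K] [ContinuousInv₀ K] [Algebra A K]
    [IsFractionRing A K] (hcont : Continuous (algebraMap A K)) {f : ι → A} (hf : DenseRange f) :
    Dense {q : K | ∃ i j, f j ≠ 0 ∧ q = algebraMap A K (f i) / algebraMap A K (f j)} := by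
  intro q
  obtain ⟨c, d, hd, rfl⟩ := IsFractionRing.div_surjective (A := A) q
  have hd_map : algebraMap A K d ≠ 0 := (IsLocalization.map_units K ⟨d, hd⟩).ne_zero
  have hd_ne : d ≠ 0 := by
    rintro rfl
    simp at hd_map
  have hopen : IsOpen {v : A × A | v.2 ≠ 0} := isOpen_ne.preimage continuous_snd
  have hmem : (c, d) ∈ closure ({v : A × A | v.2 ≠ 0} ∩ Set.range (Prod.map f f)) :=
    (hf.prodMap hf).open_subset_closure_inter hopen hd_ne
  have hdiv : ContinuousAt (fun v : A × A ↦ algebraMap A K v.1 / algebraMap A K v.2) (c, d) :=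
    (hcont.comp continuous_fst).continuousAt.div (hcont.comp continuous_snd).continuousAt hd_map
  refine hdiv.continuousWithinAt.mem_closure hmem ?_
  rintro _ ⟨hne, ⟨i, j⟩, rfl⟩
  exact ⟨i, j, hne, rfl⟩

section PadicIntegers

variable {p : ℕ} [Fact p.Prime]

theorem isUnit_intCast_padicInt_iff {k : ℤ} : IsUnit (k : ℤ_[p]) ↔ ¬ (p : ℤ) ∣ k := by
  rw [← PadicInt.norm_int_lt_one_iff_dvd, ← PadicInt.not_isUnit_iff, not_not]

theorem natCard_units_quotient_maximalIdeal_padicInt :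
    Nat.card (ℤ_[p] ⧸ maximalIdeal ℤ_[p])ˣ = p - 1 := by
  have hcongr : Nat.card (ResidueField ℤ_[p])ˣ = Nat.card (ZMod p)ˣ :=
    Nat.card_congr (Units.mapEquiv PadicInt.residueField.toMulEquiv).toEquiv
  rwa [Nat.card_eq_fintype_card (α := (ZMod p)ˣ), ZMod.card_units] at hcongr

theorem exists_pow_eq_of_isUnit_padicInt {n : ℕ} (hp : p.Coprime n) (hp_sub_one : (p - 1).Coprime n)
    {u : ℤ_[p]} (hu : IsUnit u) : ∃ x : ℤ_[p], x ^ n = u := by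
  have hn : IsUnit (n : ℤ_[p]) :=
    PadicInt.isUnit_iff.mpr (PadicInt.norm_natCast_eq_one_iff.mpr hp)
  refine exists_pow_eq_of_coprime_card_units_quotient (maximalIdeal ℤ_[p]) hn ?_ hu
  rwa [natCard_units_quotient_maximalIdeal_padicInt]

theorem stmt_18_general {n : ℕ} (hp : p.Coprime n) (hp_sub_one : (p - 1).Coprime n) {a b : ℤ_[p]}
    (ha : IsUnit a) (hb : IsUnit b) :
    Dense {q : ℚ_[p] | ∃ x y z w : ℤ, a * z ^ n + b * w ^ n ≠ 0 ∧
      q = ((a * x ^ n + b * y ^ n : ℤ_[p]) : ℚ_[p]) /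
        ((a * z ^ n + b * w ^ n : ℤ_[p]) : ℚ_[p])} := by
  have hn : n ≠ 0 := by
    rintro rfl
    exact (Fact.out : p.Prime).ne_one ((Nat.coprime_zero_right p).mp hp)
  have hvalues := denseRange_mul_pow_add_mul_pow hn
    (fun _ ↦ exists_pow_eq_of_isUnit_padicInt hp hp_sub_one) ha hb PadicInt.denseRange_intCast
  have hcont : Continuous (algebraMap ℤ_[p] ℚ_[p]) := continuous_subtype_val
  simpa only [Prod.exists, PadicInt.algebraMap_apply] using
    dense_setOf_div_of_denseRange hcont hvalues

end PadicIntegers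

/-- For a prime `p ≡ 2 (mod 3)` with `p ∤ ab`, the ratio set of
`C(x,y) = a x^3 + b y^3` is dense in `ℚ_p`. -/
theorem stmt_18 (p : ℕ) [Fact p.Prime] (hp : p % 3 = 2) (a b : ℤ)
    (ha : ¬ (p : ℤ) ∣ a) (hb : ¬ (p : ℤ) ∣ b) :
    Dense {q : ℚ_[p] | ∃ x y z w : ℤ, a * z ^ 3 + b * w ^ 3 ≠ 0 ∧
      q = ((a * x ^ 3 + b * y ^ 3 : ℤ) : ℚ_[p]) / ((a * z ^ 3 + b * w ^ 3 : ℤ) : ℚ_[p])} := by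
  have hcop : p.Coprime 3 ∧ (p - 1).Coprime 3 := by
    constructor <;> exact (Nat.prime_three.coprime_iff_not_dvd.mpr (by omega)).symm
  have hdense := stmt_18_general hcop.1 hcop.2 (isUnit_intCast_padicInt_iff.mpr ha)
    (isUnit_intCast_padicInt_iff.mpr hb)
  convert hdense <;> norm_cast
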